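/- Let K be a field, O ⊆ K a one-dimensional semilocal Dedekind domain with fraction field K, and K′ ⊆ K a subfield. Then O ∩ K′ is either a field or a semilocal Dedekind domain, and in either case its fraction field is K′. -/

import Mathlib

/-!
Let `vᵢ` be finitely many valuations of a field and let `R` be the ring of elements that are
integral for all of them. The key point is that for any `x`, `y` and a suitable `n > 0`, the form
`hₙ(x, y) = xⁿ + xⁿ⁻¹y + ⋯ + yⁿ` satisfies `vᵢ(hₙ(x, y)) = max(vᵢ x, vᵢ y)ⁿ` for every `i`.

* With `y = 1`, the identity `x = (x / hₙ(x, 1)) / (1 / hₙ(x, 1))` writes `x` as a fraction of `R`.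
* Iterating, an ideal `I` on which every `vᵢ` attains a maximum `γᵢ` has a power containing some
  `b` with `vᵢ b = γᵢ ^ N` for all `i`, and then `I ^ N = (b)`. If all `γᵢ` are `1`, then `b` is a
  unit and `I = R`, so a proper ideal lies in the centre of some `vᵢ` and `R` is semilocal. If the
  `vᵢ` are discrete, then the `γᵢ` always exist, so every nonzero ideal is invertible and `R` is
  Dedekind.

The ring `O ∩ K'` is of this kind: take the restrictions to `K'` of the valuations attached to the
finitely many maximal ideals of `O`.
-/

open Finset
open scoped WithZero nonZeroDivisors

section HomogeneousSums

variable {R : Type*} [CommSemiring R]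

/-- The complete homogeneous symmetric polynomial of degree `n`, evaluated at two elements. It
replaces a geometric sum, treating its two arguments symmetrically. -/
def hsymm₂ (x y : R) (n : ℕ) : R := ∑ p ∈ antidiagonal n, x ^ p.1 * y ^ p.2

lemma hsymm₂_comm (x y : R) (n : ℕ) : hsymm₂ x y n = hsymm₂ y x n := by
  rw [hsymm₂, ← Nat.sum_antidiagonal_swap]
  exact sum_congr rfl fun _ _ => mul_comm _ _

lemma hsymm₂_zero (x y : R) : hsymm₂ x y 0 = 1 := by simp [hsymm₂]

lemma hsymm₂_succ (x y : R) (n : ℕ) : hsymm₂ x y (n + 1) = y ^ (n + 1) + x * hsymm₂ x y n := by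
  simp only [hsymm₂, Nat.sum_antidiagonal_succ, mul_sum, pow_zero, one_mul, pow_succ', mul_assoc]

lemma hsymm₂_add_add_one (x y : R) (m n : ℕ) :
    hsymm₂ x y (m + n + 1) = y ^ (n + 1) * hsymm₂ x y m + x ^ (m + 1) * hsymm₂ x y n := by
  induction m with
  | zero => rw [zero_add, hsymm₂_succ, hsymm₂_zero, mul_one, zero_add, pow_one]
  | succ m ih => rw [hsymm₂_succ, Nat.add_right_comm m 1 n, ih, hsymm₂_succ x y m]; ring

lemma hsymm₂_mem_pow {I : Ideal R} {x y : R} (hx : x ∈ I) (hy : y ∈ I) (n : ℕ) :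
    hsymm₂ x y n ∈ I ^ n := by
  refine sum_mem fun p hp => ?_
  rw [← mem_antidiagonal.1 hp, pow_add]
  exact Ideal.mul_mem_mul (Ideal.pow_mem_pow hx _) (Ideal.pow_mem_pow hy _)

end HomogeneousSums

section UpperBounds

variable {R Γ : Type*} [CommRing R] [LinearOrderedCommMonoidWithZero Γ] (v : Valuation R Γ)

lemma map_le_pow_of_mem_pow {I : Ideal R} {γ : Γ} (h : ∀ y ∈ I, v y ≤ γ) {n : ℕ}
    (hn : n ≠ 0) {y : R} (hy : y ∈ I ^ n) : v y ≤ γ ^ n := by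
  induction n, Nat.one_le_iff_ne_zero.2 hn using Nat.le_induction generalizing y with
  | base => simpa using h y (by simpa using hy)
  | succ n hn ih =>
    rw [pow_succ] at hy
    refine Submodule.mul_induction_on hy (fun a ha b hb => ?_) fun a b => v.map_add_le
    rw [map_mul, pow_succ]
    exact mul_le_mul' (ih (by lia) ha) (h b hb)

lemma map_hsymm₂_le {x y : R} (hxy : v x ≤ v y) (n : ℕ) : v (hsymm₂ x y n) ≤ v y ^ n := by
  refine v.map_sum_le fun p hp => ?_
  rw [← mem_antidiagonal.1 hp, pow_add, map_mul, map_pow, map_pow]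
  gcongr

end UpperBounds

section ValuationOfHomogeneousSums

variable {R Γ : Type*} [CommRing R] [LinearOrderedCommGroupWithZero Γ] (v : Valuation R Γ)

lemma pos_of_map_hsymm₂_lt_pow {x y : R} {n : ℕ} (h : v (hsymm₂ x y n) < v y ^ n) : 0 < v y := by
  refine zero_lt_iff.2 fun hy => ?_
  rcases n.eq_zero_or_pos with rfl | hn
  · simp [hsymm₂_zero] at h
  · simp [hy, hn.ne'] at h

lemma map_hsymm₂_lt_pow_mul_add {x y : R} (hxy : v x ≤ v y) {n : ℕ}
    (h : v (hsymm₂ x y n) < v y ^ n) (k : ℕ) :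
    v (hsymm₂ x y ((n + 1) * k + n)) < v y ^ ((n + 1) * k + n) := by
  have hy := pos_of_map_hsymm₂_lt_pow v h
  induction k with
  | zero => simpa only [mul_zero, zero_add] using h
  | succ k ih =>
    set m := (n + 1) * k + n with hm
    rw [show (n + 1) * (k + 1) + n = m + n + 1 by rw [hm]; ring, hsymm₂_add_add_one]
    refine v.map_add_lt ?_ ?_ <;> rw [map_mul, map_pow]
    · calc v y ^ (n + 1) * v (hsymm₂ x y m)
          < v y ^ (n + 1) * v y ^ m := mul_lt_mul_of_pos_left ih (pow_pos hy _)
        _ = v y ^ (m + n + 1) := by rw [← pow_add]; congr 1; lia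
    · calc v x ^ (m + 1) * v (hsymm₂ x y n) ≤ v y ^ (m + 1) * v (hsymm₂ x y n) := by gcongr
        _ < v y ^ (m + 1) * v y ^ n := mul_lt_mul_of_pos_left h (pow_pos hy _)
        _ = v y ^ (m + n + 1) := by rw [← pow_add]; congr 1; lia

lemma exists_forall_dvd_map_hsymm₂_eq_of_le {x y : R} (hxy : v x ≤ v y) :
    ∃ d ≠ 0, ∀ n, d ∣ n → v (hsymm₂ x y n) = v y ^ n := by
  by_cases h : ∃ n, v (hsymm₂ x y n) < v y ^ n
  · obtain ⟨n, hn⟩ := h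
    refine ⟨n + 1, n.succ_ne_zero, ?_⟩
    rintro _ ⟨_ | k, rfl⟩
    · simp [hsymm₂_zero]
    have hlt := map_hsymm₂_lt_pow_mul_add v hxy hn k
    rw [mul_add_one, ← add_assoc, hsymm₂_succ, ← map_pow]
    refine v.map_add_eq_of_lt_left ?_
    have hy := pos_of_map_hsymm₂_lt_pow v hn
    calc v (x * hsymm₂ x y ((n + 1) * k + n))
        ≤ v y * v (hsymm₂ x y ((n + 1) * k + n)) := by rw [map_mul]; gcongr
      _ < v y * v y ^ ((n + 1) * k + n) := by gcongr
      _ = v (y ^ ((n + 1) * k + n + 1)) := by rw [map_pow, pow_succ']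
  · push Not at h
    exact ⟨1, one_ne_zero, fun n _ => (map_hsymm₂_le v hxy n).antisymm (h n)⟩

lemma exists_forall_dvd_map_hsymm₂_eq (x y : R) :
    ∃ d ≠ 0, ∀ n, d ∣ n → v (hsymm₂ x y n) = max (v x) (v y) ^ n := by
  rcases le_total (v x) (v y) with h | h
  · simpa only [max_eq_right h] using exists_forall_dvd_map_hsymm₂_eq_of_le v h
  · simpa only [max_eq_left h, hsymm₂_comm x y] using exists_forall_dvd_map_hsymm₂_eq_of_le v h

end ValuationOfHomogeneousSums

section FamiliesOfValuations

variable {R ι : Type*} {Γ : ι → Type*} [CommRing R] [∀ i, LinearOrderedCommGroupWithZero (Γ i)]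

lemma exists_forall_map_hsymm₂_eq [Finite ι] (v : ∀ i, Valuation R (Γ i)) (x y : R) :
    ∃ n ≠ 0, ∀ i, v i (hsymm₂ x y n) = max (v i x) (v i y) ^ n := by
  have := Fintype.ofFinite ι
  choose d hd h using fun i => exists_forall_dvd_map_hsymm₂_eq (v i) x y
  exact ⟨∏ i, d i, prod_ne_zero_iff.2 fun i _ => hd i,
    fun i => h i _ (dvd_prod_of_mem d (mem_univ i))⟩

lemma exists_mem_pow_forall_map_eq_pow [Finite ι] (v : ∀ i, Valuation R (Γ i)) {I : Ideal R}
    {γ : ∀ i, Γ i} (hγ : ∀ i, IsGreatest (v i '' I) (γ i)) :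
    ∃ n ≠ 0, ∃ b ∈ I ^ n, ∀ i, v i b = γ i ^ n := by
  classical
  have := Fintype.ofFinite ι
  suffices h : ∀ s : Finset ι, ∃ n ≠ 0, ∃ b ∈ I ^ n, ∀ i ∈ s, v i b = γ i ^ n by
    simpa using h univ
  intro s
  induction s using Finset.induction_on with
  | empty => exact ⟨1, one_ne_zero, 0, zero_mem _, by simp⟩
  | insert j s _ ih =>
    obtain ⟨n, hn, b, hb, hbs⟩ := ih
    obtain ⟨a, ha, haj⟩ := (hγ j).1
    have le_pow (i : ι) {y : R} (hy : y ∈ I ^ n) : v i y ≤ γ i ^ n :=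
      map_le_pow_of_mem_pow (v i) (fun z hz => (hγ i).2 ⟨z, hz, rfl⟩) hn hy
    have han : a ^ n ∈ I ^ n := Ideal.pow_mem_pow ha n
    have max_eq : ∀ i ∈ insert j s, max (v i b) (v i (a ^ n)) = γ i ^ n := by
      rw [forall_mem_insert]
      refine ⟨?_, fun i hi => ?_⟩
      · rw [map_pow, haj, max_eq_right (le_pow j hb)]
      · rw [hbs i hi, max_eq_left (le_pow i han)]
    obtain ⟨m, hm, hmax⟩ := exists_forall_map_hsymm₂_eq v b (a ^ n)
    refine ⟨n * m, mul_ne_zero hn hm, hsymm₂ b (a ^ n) m, ?_, fun i hi => ?_⟩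
    · rw [pow_mul]
      exact hsymm₂_mem_pow hb han m
    · rw [hmax, max_eq i hi, pow_mul]

end FamiliesOfValuations

/-- `R` is the subring of `F` consisting of the elements that are integral for every valuation
`v i`; for a single valuation this is `Valuation.Integers`. -/
structure JointIntegers {F ι : Type*} {Γ : ι → Type*} [Field F]
    [∀ i, LinearOrderedCommGroupWithZero (Γ i)] (v : ∀ i, Valuation F (Γ i))
    (R : Type*) [CommRing R] [Algebra R F] : Prop where
  injective : Function.Injective (algebraMap R F)
  forall_le_one_iff : ∀ x, (∀ i, v i x ≤ 1) ↔ x ∈ (algebraMap R F).range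

namespace JointIntegers

variable {F R ι : Type*} {Γ : ι → Type*} [Field F] [CommRing R] [Algebra R F]
  [∀ i, LinearOrderedCommGroupWithZero (Γ i)] {v : ∀ i, Valuation F (Γ i)}

lemma map_le_one (hR : JointIntegers v R) (i : ι) (r : R) : v i (algebraMap R F r) ≤ 1 :=
  (hR.forall_le_one_iff _).2 ⟨r, rfl⟩ i

lemma comap {E S : Type*} [Field E] [CommRing S] [Algebra S E] (hR : JointIntegers v R)
    (φ : E →+* F) (hS : Function.Injective (algebraMap S E))
    (hrange : ∀ x, x ∈ (algebraMap S E).range ↔ φ x ∈ (algebraMap R F).range) :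
    JointIntegers (fun i => (v i).comap φ) S where
  injective := hS
  forall_le_one_iff x := by rw [hrange, ← hR.forall_le_one_iff]; rfl

lemma dvd_of_forall_map_le [Nonempty ι] (hR : JointIntegers v R) {a b : R}
    (h : ∀ i, v i (algebraMap R F b) ≤ v i (algebraMap R F a)) : a ∣ b := by
  obtain ⟨i₀⟩ := ‹Nonempty ι›
  by_cases ha : algebraMap R F a = 0
  · have hb : algebraMap R F b = 0 := by simpa [ha] using h i₀
    rw [(map_eq_zero_iff _ hR.injective).1 hb]
    exact dvd_zero a
  · obtain ⟨c, hc⟩ := (hR.forall_le_one_iff (algebraMap R F b / algebraMap R F a)).1 fun i => by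
      rw [map_div₀]
      exact div_le_one_of_le₀ (h i) zero_le
    exact ⟨c, hR.injective (by rw [map_mul, hc, mul_div_cancel₀ _ ha])⟩

lemma isFractionRing [Finite ι] [Nonempty ι] (hR : JointIntegers v R) : IsFractionRing R F := by
  have := (faithfulSMul_iff_algebraMap_injective R F).2 hR.injective
  have : IsDomain R := hR.injective.isDomain (algebraMap R F)
  refine IsFractionRing.of_field R F fun x => ?_
  obtain ⟨n, hn, hg⟩ := exists_forall_map_hsymm₂_eq v x 1
  set g := hsymm₂ x 1 n
  have one_le (i : ι) : 1 ≤ max (v i x) (v i 1) := by rw [map_one]; exact le_max_right _ _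
  have one_le_map (i : ι) : 1 ≤ v i g := by rw [hg]; exact one_le_pow₀ (one_le i)
  have map_le_map (i : ι) : v i x ≤ v i g := by
    rw [hg]
    exact (le_max_left _ _).trans (le_self_pow₀ (one_le i) hn)
  have hg0 : g ≠ 0 := by
    obtain ⟨i₀⟩ := ‹Nonempty ι›
    exact (v i₀).ne_zero_iff.1 (zero_lt_one.trans_le (one_le_map i₀)).ne'
  obtain ⟨r, hr⟩ := (hR.forall_le_one_iff (x / g)).1 fun i => by
    rw [map_div₀]
    exact div_le_one_of_le₀ (map_le_map i) zero_le
  obtain ⟨s, hs⟩ := (hR.forall_le_one_iff g⁻¹).1 fun i => by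
    rw [map_inv₀]
    exact inv_le_one_of_one_le₀ (one_le_map i)
  exact ⟨r, s, by rw [hr, hs, div_inv_eq_mul, div_mul_cancel₀ x hg0]⟩

lemma exists_pow_eq_span_singleton [Finite ι] [Nonempty ι] (hR : JointIntegers v R) {I : Ideal R}
    {γ : ∀ i, Γ i} (hγ : ∀ i, IsGreatest ((v i).comap (algebraMap R F) '' I) (γ i)) :
    ∃ n ≠ 0, ∃ b, (∀ i, v i (algebraMap R F b) = γ i ^ n) ∧ I ^ n = Ideal.span {b} := by
  obtain ⟨n, hn, b, hb, hbγ⟩ := exists_mem_pow_forall_map_eq_pow _ hγ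
  refine ⟨n, hn, b, hbγ, le_antisymm (fun y hy => ?_) ((Ideal.span_singleton_le_iff_mem _).2 hb)⟩
  refine Ideal.mem_span_singleton.2 (hR.dvd_of_forall_map_le fun i => ?_)
  exact (map_le_pow_of_mem_pow _ (fun z hz => (hγ i).2 ⟨z, hz, rfl⟩) hn hy).trans_eq (hbγ i).symm

lemma exists_forall_mem_map_lt_one [Finite ι] [Nonempty ι] (hR : JointIntegers v R) {I : Ideal R}
    (hI : I ≠ ⊤) : ∃ i, ∀ a ∈ I, v i (algebraMap R F a) < 1 := by
  by_contra! h
  have isGreatest_one (i : ι) : IsGreatest ((v i).comap (algebraMap R F) '' I) 1 := by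
    obtain ⟨a, ha, hle⟩ := h i
    refine ⟨⟨a, ha, (hR.map_le_one i a).antisymm hle⟩, ?_⟩
    rintro _ ⟨r, -, rfl⟩
    exact hR.map_le_one i r
  obtain ⟨n, hn, b, hb, hspan⟩ := hR.exists_pow_eq_span_singleton isGreatest_one
  have hb_unit : IsUnit b := isUnit_of_dvd_one (hR.dvd_of_forall_map_le fun i => by simp [hb i])
  rw [Ideal.span_singleton_eq_top.2 hb_unit] at hspan
  exact hI (top_le_iff.1 (hspan.ge.trans (Ideal.pow_le_self hn)))

lemma finite_setOf_isMaximal [Finite ι] [Nonempty ι] (hR : JointIntegers v R) :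
    {I : Ideal R | I.IsMaximal}.Finite := by
  choose! c hc using fun (I : Ideal R) (hI : I.IsMaximal) =>
    hR.exists_forall_mem_map_lt_one hI.ne_top
  refine Set.Finite.of_finite_image (Set.toFinite (c '' _)) fun M hM N hN hMN => ?_
  by_contra hne
  obtain ⟨a, ha, b, hb, hab⟩ := Submodule.mem_sup.1
    ((Ideal.eq_top_iff_one _).1 (Ideal.IsMaximal.coprime_of_ne hM hN hne))
  have hlt := (v (c M)).map_add_lt (hc M hM a ha) (hMN ▸ hc N hN b hb)
  rw [← map_add, hab, map_one, map_one] at hlt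
  exact hlt.false

end JointIntegers

lemma isDedekindDomain_of_forall_exists_pow_eq_span_singleton {R : Type*} [CommRing R] [IsDomain R]
    (h : ∀ I : Ideal R, I ≠ ⊥ → ∃ n ≠ 0, ∃ b, I ^ n = Ideal.span {b}) : IsDedekindDomain R := by
  let K := FractionRing R
  have isUnit_coeIdeal (I : Ideal R) (hI : I ≠ ⊥) : IsUnit (I : FractionalIdeal R⁰ K) := by
    obtain ⟨n, hn, b, hIb⟩ := h I hI
    have hb : algebraMap R K b ≠ 0 := by
      rw [Ne, FaithfulSMul.algebraMap_eq_zero_iff, ← Ideal.span_singleton_eq_bot, ← hIb]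
      exact pow_ne_zero n hI
    rw [← isUnit_pow_iff hn, ← FractionalIdeal.coeIdeal_pow, hIb,
      FractionalIdeal.coeIdeal_span_singleton]
    exact .of_mul_eq_one _ (FractionalIdeal.spanSingleton_mul_inv K hb)
  refine (isDedekindDomain_iff_mul_inv_cancel (K := K)).2 fun I hI => ?_
  obtain ⟨a, J, ha, rfl⟩ := FractionalIdeal.exists_eq_spanSingleton_mul I
  have hJ : J ≠ ⊥ := FractionalIdeal.coeIdeal_ne_zero.1 (right_ne_zero_of_mul hI)
  have ha' : (algebraMap R K a)⁻¹ ≠ 0 := by simpa using ha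
  have hunit := (IsUnit.of_mul_eq_one _ (FractionalIdeal.spanSingleton_mul_inv K ha')).mul
    (isUnit_coeIdeal J hJ)
  exact (FractionalIdeal.mul_inv_cancel_iff_isUnit K).2 hunit

lemma exists_isGreatest_of_nonempty_of_bddAbove {S : Set ℤᵐ⁰} (hne : S.Nonempty)
    (hbdd : BddAbove S) : ∃ γ, IsGreatest S γ := by
  rcases (S \ {0}).eq_empty_or_nonempty with h | h
  · obtain rfl := (Set.Nonempty.subset_singleton_iff hne).1 (Set.sdiff_eq_empty.1 h)
    exact ⟨0, isGreatest_singleton⟩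
  obtain ⟨β, hβ⟩ := hbdd
  have bddAbove_log : BddAbove (WithZero.log '' (S \ {0})) := by
    refine ⟨β.log, ?_⟩
    rintro _ ⟨x, ⟨hx, hx0⟩, rfl⟩
    exact (WithZero.log_le_log hx0 (ne_bot_of_le_ne_bot hx0 (hβ hx))).2 (hβ hx)
  obtain ⟨_, ⟨γ, ⟨hγ, hγ0⟩, rfl⟩, hmax⟩ := bddAbove_log.exists_isGreatest_of_nonempty (h.image _)
  refine ⟨γ, hγ, fun x hx => ?_⟩
  rcases eq_or_ne x 0 with rfl | hx0
  · exact zero_le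
  · exact (WithZero.log_le_log hx0 hγ0).1 (hmax ⟨x, ⟨hx, hx0⟩, rfl⟩)

lemma JointIntegers.isDedekindDomain {F R ι : Type*} [Field F] [CommRing R] [Algebra R F]
    [Finite ι] [Nonempty ι] {v : ι → Valuation F ℤᵐ⁰} (hR : JointIntegers v R) :
    IsDedekindDomain R := by
  have : IsDomain R := hR.injective.isDomain (algebraMap R F)
  refine isDedekindDomain_of_forall_exists_pow_eq_span_singleton fun I _ => ?_
  have exists_greatest (i : ι) : ∃ γ, IsGreatest ((v i).comap (algebraMap R F) '' I) γ := by
    refine exists_isGreatest_of_nonempty_of_bddAbove ⟨_, 0, I.zero_mem, rfl⟩ ⟨1, ?_⟩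
    rintro _ ⟨r, -, rfl⟩
    exact hR.map_le_one i r
  choose γ hγ using exists_greatest
  obtain ⟨n, hn, b, -, hb⟩ := hR.exists_pow_eq_span_singleton hγ
  exact ⟨n, hn, b, hb⟩

section HeightOneSpectrum

open IsDedekindDomain

variable (O : Type*) [CommRing O] [IsDedekindDomain O]

lemma jointIntegers_valuation (K : Type*) [Field K] [Algebra O K] [IsFractionRing O K] :
    JointIntegers (fun P : HeightOneSpectrum O => P.valuation K) O where
  injective := IsFractionRing.injective O K
  forall_le_one_iff x := by
    refine ⟨HeightOneSpectrum.mem_integers_of_valuation_le_one K x, ?_⟩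
    rintro ⟨r, rfl⟩ P
    exact P.valuation_le_one r

lemma finite_heightOneSpectrum (h : {I : Ideal O | I.IsMaximal}.Finite) :
    Finite (HeightOneSpectrum O) := by
  have := h.to_subtype
  exact .of_injective (fun P => (⟨P.asIdeal, P.isMaximal⟩ : {I : Ideal O | I.IsMaximal}))
    fun P Q hPQ => HeightOneSpectrum.ext (congrArg Subtype.val hPQ)

end HeightOneSpectrum

/-- For a one-dimensional semilocal Dedekind domain `O ⊆ K` with fraction field `K` and a
subfield `K′ ⊆ K`, the intersection `O ∩ K′` is a field or a semilocal Dedekind domain,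
and in either case its fraction field is `K′`. -/
theorem stmt_2 {K : Type*} [Field K] (O : Subring K)
    (hDed : IsDedekindDomain O)
    (hsemilocal : {I : Ideal O | I.IsMaximal}.Finite)
    (hnotfield : ¬ IsField O)
    (hfrac : IsFractionRing O K)
    (K' : Subfield K) :
    (IsField ↥(O ⊓ K'.toSubring) ∨
      (IsDedekindDomain ↥(O ⊓ K'.toSubring) ∧
        {I : Ideal ↥(O ⊓ K'.toSubring) | I.IsMaximal}.Finite)) ∧
    (letI : Algebra ↥(O ⊓ K'.toSubring) ↥K'.toSubring :=
      (Subring.inclusion (inf_le_right : O ⊓ K'.toSubring ≤ K'.toSubring)).toAlgebra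
     IsFractionRing ↥(O ⊓ K'.toSubring) ↥K'.toSubring) := by
  have : Finite (IsDedekindDomain.HeightOneSpectrum O) := finite_heightOneSpectrum O hsemilocal
  have : Nonempty (IsDedekindDomain.HeightOneSpectrum O) :=
    (IsDedekindDomain.HeightOneSpectrum.equivMaximalSpectrum hnotfield).nonempty
  let _ : Algebra ↥(O ⊓ K'.toSubring) ↥K' :=
    (Subring.inclusion (inf_le_right : O ⊓ K'.toSubring ≤ K'.toSubring)).toAlgebra
  have mem_range_iff (x : K') : x ∈ (algebraMap ↥(O ⊓ K'.toSubring) ↥K').range ↔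
      K'.subtype x ∈ (algebraMap O K).range := by
    constructor
    · rintro ⟨r, rfl⟩
      exact ⟨⟨r, r.2.1⟩, rfl⟩
    · rintro ⟨r, hr⟩
      have hxO : (x : K) ∈ O := (show (r : K) = x from hr) ▸ r.2
      exact ⟨⟨x, hxO, x.2⟩, rfl⟩
  have hR := (jointIntegers_valuation O K).comap K'.subtype
    (Subring.inclusion_injective _) mem_range_iff
  -- `IsDedekindDomain` includes fields, so the second alternative always applies.
  exact ⟨.inr ⟨hR.isDedekindDomain, hR.finite_setOf_isMaximal⟩, hR.isFractionRing⟩
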